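/- (Weierstraß representation formula for timelike minimal surfaces, direct part.) Let D ⊆ ℝ² be open with coordinates (u,v), let q, f : D → ℝ be smooth with ∂_v q = ∂_v f = 0 (Lorentz holomorphic), let r, g : D → ℝ be smooth with ∂_u r = ∂_u g = 0 (Lorentz antiholomorphic), and let φ : D → ℝ³ be smooth with φ_u = (½(1+q²), −½(1−q²), −q)·f and φ_v = (−½(1+r²), −½(1−r²), −r)·g. Then φ_uv = 0, ⟨φ_u,φ_u⟩ = ⟨φ_v,φ_v⟩ = 0, and ⟨φ_u,φ_v⟩ = ½(1+qr)²fg; i.e. φ is a timelike minimal surface with metric ds² = (1+qr)²f g du dv wherever (1+qr)²fg ≠ 0. -/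

import Mathlib

noncomputable section

/-- The Minkowski bilinear form on `𝔼³₁ = ℝ³`: `⟨a,b⟩ = −a₁b₁ + a₂b₂ + a₃b₃`. -/
def mink (a b : ℝ × ℝ × ℝ) : ℝ := -(a.1 * b.1) + a.2.1 * b.2.1 + a.2.2 * b.2.2

/-- Partial derivative in the first coordinate. -/
def pu {E : Type*} [NormedAddCommGroup E] [NormedSpace ℝ E] (f : ℝ × ℝ → E) (w : ℝ × ℝ) : E :=
  fderiv ℝ f w (1, 0)

/-- Partial derivative in the second coordinate. -/
def pv {E : Type*} [NormedAddCommGroup E] [NormedSpace ℝ E] (f : ℝ × ℝ → E) (w : ℝ × ℝ) : E :=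
  fderiv ℝ f w (0, 1)

/-!
Up to the real factors `f` and `g`, the coordinate derivatives of `φ` run on two parametrized curves
of null vectors, one composed with `q` and the other with `r`. This gives the conformal relations
pointwise, while the wave equation holds because Lorentz holomorphy passes from `f` and `q` to
`f • γ ∘ q` for every differentiable `γ`.
-/

variable {E F : Type*} [NormedAddCommGroup E] [NormedSpace ℝ E]
  [NormedAddCommGroup F] [NormedSpace ℝ F]

open ContinuousLinearMap in
/-- The derivative on the left is the vector-valued one-form `a du + b dv`. -/
theorem hasFDerivAt_iff_pu_pv {φ : ℝ × ℝ → E} {a b : E} {w : ℝ × ℝ} :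
    HasFDerivAt φ ((fst ℝ ℝ ℝ).smulRight a + (snd ℝ ℝ ℝ).smulRight b) w ↔
      DifferentiableAt ℝ φ w ∧ pu φ w = a ∧ pv φ w = b := by
  constructor
  · intro h
    exact ⟨h.differentiableAt, by simp [pu, h.fderiv], by simp [pv, h.fderiv]⟩
  · rintro ⟨h, rfl, rfl⟩
    convert h.hasFDerivAt using 1
    ext <;> simp [pu, pv]

/-- A map of the null coordinates `(u, v)` is Lorentz holomorphic on `D` if it is differentiable
there and its `v`-derivative vanishes. Differentiability is part of the definition because `pv`
takes the value `0` where it fails. -/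
def IsLorentzHolomorphicOn (h : ℝ × ℝ → E) (D : Set (ℝ × ℝ)) : Prop :=
  ∀ w ∈ D, DifferentiableAt ℝ h w ∧ pv h w = 0

namespace IsLorentzHolomorphicOn

variable {D : Set (ℝ × ℝ)}

theorem of_differentiableOn {h : ℝ × ℝ → E} (hD : IsOpen D) (hd : DifferentiableOn ℝ h D)
    (hv : ∀ w ∈ D, pv h w = 0) : IsLorentzHolomorphicOn h D :=
  fun w hw => ⟨hd.differentiableAt (hD.mem_nhds hw), hv w hw⟩

theorem comp {γ : E → F} {q : ℝ × ℝ → E} (hq : IsLorentzHolomorphicOn q D)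
    (hγ : ∀ w ∈ D, DifferentiableAt ℝ γ (q w)) :
    IsLorentzHolomorphicOn (γ ∘ q) D := by
  intro w hw
  obtain ⟨hqd, hqv⟩ := hq w hw
  refine ⟨(hγ w hw).comp w hqd, ?_⟩
  calc pv (γ ∘ q) w = fderiv ℝ γ (q w) (pv q w) := by
        rw [pv, fderiv_comp w (hγ w hw) hqd, ContinuousLinearMap.comp_apply, pv]
    _ = 0 := by rw [hqv, map_zero]

theorem smul {f : ℝ × ℝ → ℝ} {h : ℝ × ℝ → E} (hf : IsLorentzHolomorphicOn f D)
    (hh : IsLorentzHolomorphicOn h D) : IsLorentzHolomorphicOn (f • h) D := by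
  intro w hw
  obtain ⟨hfd, hfv⟩ := hf w hw
  obtain ⟨hhd, hhv⟩ := hh w hw
  refine ⟨hfd.smul hhd, ?_⟩
  calc pv (f • h) w = f w • pv h w + pv f w • h w := by
        simp only [pv, fderiv_smul hfd hhd, add_apply, smul_apply,
          ContinuousLinearMap.smulRight_apply]
    _ = 0 := by rw [hfv, hhv, smul_zero, zero_smul, add_zero]

theorem congr {h k : ℝ × ℝ → E} (hh : IsLorentzHolomorphicOn h D) (hD : IsOpen D)
    (hkh : Set.EqOn k h D) : IsLorentzHolomorphicOn k D := by
  intro w hw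
  obtain ⟨hhd, hhv⟩ := hh w hw
  have hev : k =ᶠ[nhds w] h := hkh.eventuallyEq_of_mem (hD.mem_nhds hw)
  exact ⟨hhd.congr_of_eventuallyEq hev, by rw [pv, hev.fderiv_eq]; exact hhv⟩

end IsLorentzHolomorphicOn

theorem mink_smul_smul (s t : ℝ) (a b : ℝ × ℝ × ℝ) :
    mink (s • a) (t • b) = s * t * mink a b := by
  simp only [mink, Prod.smul_fst, Prod.smul_snd, smul_eq_mul]
  ring

/-- The null vector `φ_u / f` in Minkowski space determined by the value `t` of the Lorentz
holomorphic Weierstraß datum `q`. -/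
def nullU (t : ℝ) : ℝ × ℝ × ℝ := (1 / 2 * (1 + t ^ 2), -(1 / 2) * (1 - t ^ 2), -t)

/-- The null vector `φ_v / g` in Minkowski space determined by the value `t` of the Lorentz
antiholomorphic Weierstraß datum `r`. -/
def nullV (t : ℝ) : ℝ × ℝ × ℝ := (-(1 / 2) * (1 + t ^ 2), -(1 / 2) * (1 - t ^ 2), -t)

theorem mink_nullU_self (t : ℝ) : mink (nullU t) (nullU t) = 0 := by
  simp only [mink, nullU]
  ring

theorem mink_nullV_self (t : ℝ) : mink (nullV t) (nullV t) = 0 := by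
  simp only [mink, nullV]
  ring

theorem mink_nullU_nullV (s t : ℝ) : mink (nullU s) (nullV t) = 1 / 2 * (1 + s * t) ^ 2 := by
  simp only [mink, nullU, nullV]
  ring

theorem differentiable_nullU : Differentiable ℝ nullU := by
  unfold nullU
  fun_prop

open ContinuousLinearMap in
theorem weierstrass_representation_minimal_general {D : Set (ℝ × ℝ)} (hD : IsOpen D)
    {q f r g : ℝ × ℝ → ℝ} (hq : IsLorentzHolomorphicOn q D) (hf : IsLorentzHolomorphicOn f D)
    {φ : ℝ × ℝ → ℝ × ℝ × ℝ}
    (hφ : ∀ w ∈ D, HasFDerivAt φ ((fst ℝ ℝ ℝ).smulRight (f w • nullU (q w)) +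
      (snd ℝ ℝ ℝ).smulRight (g w • nullV (r w))) w) :
    ∀ w ∈ D,
      pv (pu φ) w = 0 ∧
      mink (pu φ w) (pu φ w) = 0 ∧
      mink (pv φ w) (pv φ w) = 0 ∧
      mink (pu φ w) (pv φ w) = 1 / 2 * (1 + q w * r w) ^ 2 * f w * g w := by
  have hφu : Set.EqOn (pu φ) (f • nullU ∘ q) D := fun w hw =>
    (hasFDerivAt_iff_pu_pv.1 (hφ w hw)).2.1
  have hwave : IsLorentzHolomorphicOn (pu φ) D :=
    (hf.smul (hq.comp fun w _ => differentiable_nullU (q w))).congr hD hφu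
  intro w hw
  obtain ⟨-, hu, hv⟩ := hasFDerivAt_iff_pu_pv.1 (hφ w hw)
  refine ⟨(hwave w hw).2, ?_, ?_, ?_⟩
  · rw [hu, mink_smul_smul, mink_nullU_self, mul_zero]
  · rw [hv, mink_smul_smul, mink_nullV_self, mul_zero]
  · rw [hu, hv, mink_smul_smul, mink_nullU_nullV]
    ring

/-- Weierstraß representation formula for timelike minimal surfaces (direct part):
for Lorentz holomorphic `q, f` and Lorentz antiholomorphic `r, g`, the map `φ` with
`φ_u = (½(1+q²), −½(1−q²), −q)f`, `φ_v = (−½(1+r²), −½(1−r²), −r)g` satisfies the wave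
equation `φ_uv = 0`, is null-conformal, and has metric `(1+qr)² f g du dv`. -/
theorem weierstrass_representation_minimal
    (D : Set (ℝ × ℝ)) (hD : IsOpen D)
    (q f r g : ℝ × ℝ → ℝ)
    (hq : ContDiffOn ℝ (⊤ : ℕ∞) q D) (hf : ContDiffOn ℝ (⊤ : ℕ∞) f D)
    (hr : ContDiffOn ℝ (⊤ : ℕ∞) r D) (hg : ContDiffOn ℝ (⊤ : ℕ∞) g D)
    (hqv : ∀ w ∈ D, pv q w = 0) (hfv : ∀ w ∈ D, pv f w = 0)
    (hru : ∀ w ∈ D, pu r w = 0) (hgu : ∀ w ∈ D, pu g w = 0)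
    (φ : ℝ × ℝ → ℝ × ℝ × ℝ) (hφ : ContDiffOn ℝ (⊤ : ℕ∞) φ D)
    (hφu : ∀ w ∈ D, pu φ w =
      f w • ((1/2 * (1 + q w^2), -(1/2) * (1 - q w^2), -q w) : ℝ × ℝ × ℝ))
    (hφv : ∀ w ∈ D, pv φ w =
      g w • ((-(1/2) * (1 + r w^2), -(1/2) * (1 - r w^2), -r w) : ℝ × ℝ × ℝ)) :
    ∀ w ∈ D,
      pv (pu φ) w = 0 ∧
      mink (pu φ w) (pu φ w) = 0 ∧
      mink (pv φ w) (pv φ w) = 0 ∧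
      mink (pu φ w) (pv φ w) = 1/2 * (1 + q w * r w) ^ 2 * f w * g w := by
  exact weierstrass_representation_minimal_general hD
    (.of_differentiableOn hD (hq.differentiableOn (by simp)) hqv)
    (.of_differentiableOn hD (hf.differentiableOn (by simp)) hfv) fun w hw =>
      hasFDerivAt_iff_pu_pv.2
        ⟨(hφ.differentiableOn (by simp)).differentiableAt (hD.mem_nhds hw), hφu w hw, hφv w hw⟩
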